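/- Fix real exponents q, p, r, γ with 1 < q < p < r and 0 < γ < 1, and reals A > 0, B > 0, D ≥ 0. Define w : (0,∞) → ℝ by w(t) = t^{p−r}·A + t^{q−r}·D − t^{1−r−γ}·B. Then: (i) w has a unique critical point t₀ ∈ (0,∞); (ii) w is strictly increasing on (0, t₀] and strictly decreasing on [t₀, ∞), so w attains its global maximum over (0,∞) exactly at t₀; (iii) w(t) → −∞ as t → 0⁺ and w(t) → 0 as t → +∞, with w(t) > 0 for all sufficiently large t; in particular w(t₀) > 0. -/

import Mathlib

open Real Filter

/-!
For `w(t) = t ^ a * A + t ^ b * D - t ^ c * B`, dividing out the most singular power `t ^ c` gives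
`w(t) = t ^ c * (S(t) - B)` and `w'(t) = t ^ (c - 1) * (-c * B - G(t))`, where `S` and `G` are
combinations of the positive powers `t ^ (a - c)` and `t ^ (b - c)` with one positive and one
nonnegative coefficient. Such a combination increases strictly from `0` to `∞`, so `w'` changes sign
exactly once, from positive to negative, and `w` is eventually positive, hence positive at its
maximum.
-/

section FiberMap

open Set Topology

variable {a b c A B D t t₀ α β : ℝ}

theorem lt_of_strictMonoOn_Ioc_of_strictAntiOn_Ici {X Y : Type*} [LinearOrder X] [Preorder Y]
    {f : X → Y} {l m x : X} (hmono : StrictMonoOn f (Ioc l m)) (hanti : StrictAntiOn f (Ici m))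
    (hx : l < x) (hne : x ≠ m) : f x < f m := by
  rcases lt_or_gt_of_ne hne with hlt | hgt
  · exact hmono ⟨hx, hlt.le⟩ ⟨hx.trans hlt, le_rfl⟩ hlt
  · exact hanti self_mem_Ici hgt.le hgt

/-- The combination `t ^ α * A + t ^ β * D` of two real powers. Both the fiber map and the equation
for its critical points are expressed through it. -/
noncomputable def powSum (α β A D t : ℝ) : ℝ :=
  t ^ α * A + t ^ β * D

theorem powSum_zero (hα : α ≠ 0) (hβ : β ≠ 0) : powSum α β A D 0 = 0 := by
  simp [powSum, zero_rpow hα, zero_rpow hβ]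

theorem powSum_add_exponent (ht : 0 < t) :
    powSum (α + c) (β + c) A D t = t ^ c * powSum α β A D t := by
  simp only [powSum, rpow_add ht]
  ring

theorem continuous_powSum (hα : 0 ≤ α) (hβ : 0 ≤ β) : Continuous (powSum α β A D) :=
  ((continuous_rpow_const hα).mul_const A).add ((continuous_rpow_const hβ).mul_const D)

theorem strictMonoOn_powSum (hα : 0 < α) (hβ : 0 ≤ β) (hA : 0 < A) (hD : 0 ≤ D) :
    StrictMonoOn (powSum α β A D) (Ici 0) := fun _ hx _ _ hxy =>
  add_lt_add_of_lt_of_le (mul_lt_mul_of_pos_right (rpow_lt_rpow hx hxy hα) hA)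
    (mul_le_mul_of_nonneg_right (rpow_le_rpow hx hxy.le hβ) hD)

theorem tendsto_powSum_atTop_atTop (hα : 0 < α) (hA : 0 < A) (hD : 0 ≤ D) :
    Tendsto (powSum α β A D) atTop atTop := by
  refine tendsto_atTop_mono' atTop ?_ ((tendsto_rpow_atTop hα).atTop_mul_const hA)
  filter_upwards [eventually_ge_atTop 0] with t ht
  exact le_add_of_nonneg_right (mul_nonneg (rpow_nonneg ht β) hD)

theorem tendsto_rpow_atTop_zero (hα : α < 0) : Tendsto (fun t : ℝ => t ^ α) atTop (𝓝 0) := by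
  simpa only [neg_neg] using tendsto_rpow_neg_atTop (neg_pos.2 hα)

theorem tendsto_powSum_atTop_zero (hα : α < 0) (hβ : β < 0) :
    Tendsto (powSum α β A D) atTop (𝓝 0) := by
  have hsum := ((tendsto_rpow_atTop_zero hα).mul_const A).add
    ((tendsto_rpow_atTop_zero hβ).mul_const D)
  rwa [zero_mul, zero_mul, add_zero] at hsum

theorem hasDerivAt_powSum (ht : t ≠ 0) :
    HasDerivAt (powSum α β A D) (powSum (α - 1) (β - 1) (α * A) (β * D) t) t := by
  refine (((hasDerivAt_rpow_const (p := α) (Or.inl ht)).mul_const A).add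
    ((hasDerivAt_rpow_const (p := β) (Or.inl ht)).mul_const D)).congr_deriv ?_
  simp only [powSum]
  ring

theorem exists_pos_powSum_eq {y : ℝ} (hα : 0 < α) (hβ : 0 < β) (hA : 0 < A) (hD : 0 ≤ D)
    (hy : 0 < y) : ∃ t, 0 < t ∧ powSum α β A D t = y := by
  have hzero : powSum α β A D 0 = 0 := powSum_zero hα.ne' hβ.ne'
  obtain ⟨M, hyM, hM⟩ := (((tendsto_powSum_atTop_atTop hα hA hD).eventually_ge_atTop y).and
    (eventually_ge_atTop 0)).exists
  obtain ⟨t, ht, rfl⟩ := intermediate_value_Icc hM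
    (continuous_powSum hα.le hβ.le).continuousOn ⟨hzero.trans_le hy.le, hyM⟩
  refine ⟨t, ht.1.lt_of_ne ?_, rfl⟩
  rintro rfl
  exact hy.ne' hzero

/-- The fiber function `t ^ a * A + t ^ b * D - t ^ c * B`, with arbitrary exponents. The double
phase problem has `a = p - r`, `b = q - r` and `c = 1 - r - γ`. -/
noncomputable def fiberMap (a b c A D B t : ℝ) : ℝ :=
  powSum a b A D t - t ^ c * B

/-- The part of `t ^ (1 - c) * w'(t)`, for `w` the fiber map, that depends on `t`, with its sign
reversed so that it is increasing when `c < a, b < 0`; the critical points of `w` are the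
positive solutions of `fiberBalance a b c A D t = -c * B`. -/
noncomputable def fiberBalance (a b c A D : ℝ) : ℝ → ℝ :=
  powSum (a - c) (b - c) (-a * A) (-b * D)

theorem strictMonoOn_fiberBalance (hca : c < a) (hcb : c ≤ b) (ha : a < 0) (hb : b ≤ 0)
    (hA : 0 < A) (hD : 0 ≤ D) : StrictMonoOn (fiberBalance a b c A D) (Ici 0) :=
  strictMonoOn_powSum (sub_pos.2 hca) (sub_nonneg.2 hcb) (mul_pos (neg_pos.2 ha) hA)
    (mul_nonneg (neg_nonneg.2 hb) hD)

theorem exists_pos_fiberBalance_eq {y : ℝ} (hca : c < a) (hcb : c < b) (ha : a < 0) (hb : b ≤ 0)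
    (hA : 0 < A) (hD : 0 ≤ D) (hy : 0 < y) : ∃ t, 0 < t ∧ fiberBalance a b c A D t = y :=
  exists_pos_powSum_eq (sub_pos.2 hca) (sub_pos.2 hcb) (mul_pos (neg_pos.2 ha) hA)
    (mul_nonneg (neg_nonneg.2 hb) hD) hy

theorem fiberMap_eq_rpow_mul (ht : 0 < t) :
    fiberMap a b c A D B t = t ^ c * (powSum (a - c) (b - c) A D t - B) := by
  rw [mul_sub, ← powSum_add_exponent ht, sub_add_cancel, sub_add_cancel, fiberMap]

theorem hasDerivAt_fiberMap (ht : 0 < t) :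
    HasDerivAt (fiberMap a b c A D B) (t ^ (c - 1) * (-c * B - fiberBalance a b c A D t)) t := by
  refine ((hasDerivAt_powSum ht.ne').sub
    ((hasDerivAt_rpow_const (p := c) (Or.inl ht.ne')).mul_const B)).congr_deriv ?_
  have hfactor : powSum (a - 1) (b - 1) (a * A) (b * D) t =
      t ^ (c - 1) * powSum (a - c) (b - c) (a * A) (b * D) t := by
    rw [← powSum_add_exponent ht, sub_add_sub_cancel, sub_add_sub_cancel]
  rw [hfactor]
  simp only [fiberBalance, powSum]
  ring

theorem continuousOn_fiberMap : ContinuousOn (fiberMap a b c A D B) (Ioi 0) := fun _ ht =>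
  (hasDerivAt_fiberMap ht).continuousAt.continuousWithinAt

theorem deriv_fiberMap_eq_zero_iff (ht : 0 < t) :
    deriv (fiberMap a b c A D B) t = 0 ↔ fiberBalance a b c A D t = -c * B := by
  rw [(hasDerivAt_fiberMap ht).deriv, mul_eq_zero, or_iff_right (rpow_pos_of_pos ht _).ne',
    sub_eq_zero, eq_comm]

theorem strictMonoOn_fiberMap (hmono : StrictMonoOn (fiberBalance a b c A D) (Ici 0))
    (ht₀ : fiberBalance a b c A D t₀ = -c * B) :
    StrictMonoOn (fiberMap a b c A D B) (Ioc 0 t₀) := by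
  refine strictMonoOn_of_deriv_pos (convex_Ioc 0 t₀)
    (continuousOn_fiberMap.mono Ioc_subset_Ioi_self) fun t ht => ?_
  rw [interior_Ioc] at ht
  rw [(hasDerivAt_fiberMap ht.1).deriv, ← ht₀]
  exact mul_pos (rpow_pos_of_pos ht.1 _)
    (sub_pos.2 (hmono ht.1.le (ht.1.trans ht.2).le ht.2))

theorem strictAntiOn_fiberMap (hmono : StrictMonoOn (fiberBalance a b c A D) (Ici 0))
    (hpos : 0 < t₀) (ht₀ : fiberBalance a b c A D t₀ = -c * B) :
    StrictAntiOn (fiberMap a b c A D B) (Ici t₀) := by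
  refine strictAntiOn_of_deriv_neg (convex_Ici t₀)
    (continuousOn_fiberMap.mono (Ici_subset_Ioi.2 hpos)) fun t ht => ?_
  rw [interior_Ici] at ht
  have ht_pos : 0 < t := hpos.trans ht
  rw [(hasDerivAt_fiberMap ht_pos).deriv, ← ht₀]
  exact mul_neg_of_pos_of_neg (rpow_pos_of_pos ht_pos _)
    (sub_neg.2 (hmono hpos.le ht_pos.le ht))

theorem tendsto_fiberMap_nhdsGT_zero (hca : c < a) (hcb : c < b) (hc : c < 0) (hB : 0 < B) :
    Tendsto (fiberMap a b c A D B) (𝓝[>] 0) atBot := by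
  have hpow : Tendsto (fun t : ℝ => t ^ c) (𝓝[>] 0) atTop := tendsto_rpow_neg_nhdsGT_zero hc
  have hsum : Tendsto (fun t => powSum (a - c) (b - c) A D t - B) (𝓝[>] 0) (𝓝 (-B)) := by
    have hcont : Continuous fun t => powSum (a - c) (b - c) A D t - B :=
      (continuous_powSum (sub_pos.2 hca).le (sub_pos.2 hcb).le).sub continuous_const
    have hzero : powSum (a - c) (b - c) A D 0 - B = -B := by
      rw [powSum_zero (sub_pos.2 hca).ne' (sub_pos.2 hcb).ne', zero_sub]
    exact hzero ▸ (hcont.tendsto 0).mono_left nhdsWithin_le_nhds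
  refine (hpow.atTop_mul_neg (neg_neg_of_pos hB) hsum).congr' ?_
  filter_upwards [self_mem_nhdsWithin] with t ht
  exact (fiberMap_eq_rpow_mul ht).symm

theorem tendsto_fiberMap_atTop_zero (ha : a < 0) (hb : b < 0) (hc : c < 0) :
    Tendsto (fiberMap a b c A D B) atTop (𝓝 0) := by
  have hsub := (tendsto_powSum_atTop_zero (A := A) (D := D) ha hb).sub
    ((tendsto_rpow_atTop_zero hc).mul_const B)
  rwa [zero_mul, sub_zero] at hsub

theorem eventually_fiberMap_pos (hca : c < a) (hA : 0 < A) (hD : 0 ≤ D) :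
    ∀ᶠ t in atTop, 0 < fiberMap a b c A D B t := by
  filter_upwards [(tendsto_powSum_atTop_atTop (β := b - c) (sub_pos.2 hca) hA
    hD).eventually_gt_atTop B, eventually_gt_atTop 0] with t hBt ht
  rw [fiberMap_eq_rpow_mul ht]
  exact mul_pos (rpow_pos_of_pos ht c) (sub_pos.2 hBt)

theorem full_fiber_shape_general (hca : c < a) (hcb : c < b) (ha : a < 0) (hb : b < 0)
    (hA : 0 < A) (hB : 0 < B) (hD : 0 ≤ D) :
    let w : ℝ → ℝ := fiberMap a b c A D B
    ∃ t₀ : ℝ, 0 < t₀ ∧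
      (∀ t : ℝ, 0 < t → (deriv w t = 0 ↔ t = t₀)) ∧
      StrictMonoOn w (Ioc 0 t₀) ∧
      StrictAntiOn w (Ici t₀) ∧
      (∀ t : ℝ, 0 < t → t ≠ t₀ → w t < w t₀) ∧
      Tendsto w (𝓝[>] 0) atBot ∧
      Tendsto w atTop (𝓝 0) ∧
      (∃ T : ℝ, ∀ t : ℝ, T ≤ t → 0 < w t) ∧
      0 < w t₀ := by
  intro w
  have hc : c < 0 := hca.trans ha
  have hbalance : StrictMonoOn (fiberBalance a b c A D) (Ici 0) :=
    strictMonoOn_fiberBalance hca hcb.le ha hb.le hA hD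
  obtain ⟨t₀, hpos, ht₀⟩ :=
    exists_pos_fiberBalance_eq hca hcb ha hb.le hA hD (mul_pos (neg_pos.2 hc) hB)
  have hmono : StrictMonoOn w (Ioc 0 t₀) := strictMonoOn_fiberMap hbalance ht₀
  have hanti : StrictAntiOn w (Ici t₀) := strictAntiOn_fiberMap hbalance hpos ht₀
  have hmax : ∀ t, 0 < t → t ≠ t₀ → w t < w t₀ := fun _ =>
    lt_of_strictMonoOn_Ioc_of_strictAntiOn_Ici hmono hanti
  have hev : ∀ᶠ t in atTop, 0 < w t := eventually_fiberMap_pos hca hA hD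
  obtain ⟨s, hs, hs₀⟩ := (hev.and (eventually_gt_atTop t₀)).exists
  refine ⟨t₀, hpos, fun t ht => ?_, hmono, hanti, hmax, tendsto_fiberMap_nhdsGT_zero hca hcb hc hB,
    tendsto_fiberMap_atTop_zero ha hb hc, eventually_atTop.1 hev,
    hs.trans (hmax s (hpos.trans hs₀) hs₀.ne')⟩
  rw [deriv_fiberMap_eq_zero_iff ht, ← ht₀]
  exact hbalance.eq_iff_eq ht.le hpos.le

end FiberMap

/-- Qualitative behavior of the full fiber function
`w(t) = t^{p−r}A + t^{q−r}D − t^{1−r−γ}B` on `(0, ∞)`: unique critical point `t₀`,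
strictly increasing then strictly decreasing (global maximum exactly at `t₀`),
`w → −∞` at `0⁺`, `w → 0` at `+∞`, `w > 0` for large `t`, and `w(t₀) > 0`. -/
theorem full_fiber_shape (q p r γ A B D : ℝ)
    (hq : 1 < q) (hqp : q < p) (hpr : p < r)
    (hγ0 : 0 < γ) (hγ1 : γ < 1) (hA : 0 < A) (hB : 0 < B) (hD : 0 ≤ D) :
    let w : ℝ → ℝ := fun t => t ^ (p - r) * A + t ^ (q - r) * D - t ^ (1 - r - γ) * B
    ∃ t₀ : ℝ, 0 < t₀ ∧
      (∀ t : ℝ, 0 < t → (deriv w t = 0 ↔ t = t₀)) ∧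
      StrictMonoOn w (Set.Ioc 0 t₀) ∧
      StrictAntiOn w (Set.Ici t₀) ∧
      (∀ t : ℝ, 0 < t → t ≠ t₀ → w t < w t₀) ∧
      Tendsto w (nhdsWithin 0 (Set.Ioi 0)) atBot ∧
      Tendsto w atTop (nhds 0) ∧
      (∃ T : ℝ, ∀ t : ℝ, T ≤ t → 0 < w t) ∧
      0 < w t₀ :=
  full_fiber_shape_general (by linarith) (by linarith) (by linarith) (by linarith) hA hB hD
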